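/- For generic α ∈ ℂ, the quantities V_α and w satisfy the nonlinear shift relation Ṽ̂_α·(ŵ − w̃) = χ_{α,δ}(ξ+ε)·V̂_α − χ_{α,ε}(ξ+δ)·Ṽ_α, where Ṽ̂_α denotes V_α evaluated at (n+1,m+1,h), V̂_α at (n,m+1,h), and Ṽ_α at (n+1,m,h), and similarly for w. -/

import Mathlib

open scoped BigOperators

noncomputable section

/-- A period lattice in `ℂ` spanned by two `ℝ`-independent periods. -/
structure EllLattice where
  ω₁ : ℂ
  ω₂ : ℂ
  indep : ∀ a b : ℝ, a • ω₁ + b • ω₂ = 0 → a = 0 ∧ b = 0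

namespace EllLattice

/-- Membership in the lattice `Λ = ℤω₁ + ℤω₂`. -/
def mem (L : EllLattice) (z : ℂ) : Prop := ∃ m n : ℤ, z = m • L.ω₁ + n • L.ω₂

/-- The lattice point with integer coordinates `p = (m, n)`. -/
def per (L : EllLattice) (p : ℤ × ℤ) : ℂ := p.1 • L.ω₁ + p.2 • L.ω₂

/-- The Weierstrass sigma function associated to the lattice, defined by its
Hadamard product over the nonzero lattice points. -/
def sigma (L : EllLattice) (z : ℂ) : ℂ :=
  z * ∏' p : {p : ℤ × ℤ // p ≠ 0},
      ((1 - z / L.per p.1) *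
        Complex.exp (z / L.per p.1 + z ^ 2 / (2 * (L.per p.1) ^ 2)))

/-- The Weierstrass zeta function `ζ = σ′/σ`. -/
def zeta (L : EllLattice) (z : ℂ) : ℂ := deriv L.sigma z / L.sigma z

/-- The Weierstrass `℘`-function `℘ = −ζ′`. -/
def wp (L : EllLattice) (z : ℂ) : ℂ := - deriv L.zeta z

/-- `Φ_ξ(κ) = σ(ξ+κ)/(σ(ξ)σ(κ))`. -/
def Phi (L : EllLattice) (ξ κ : ℂ) : ℂ := L.sigma (ξ + κ) / (L.sigma ξ * L.sigma κ)

/-- The Lamé function `Ψ_ξ(κ) = Φ_ξ(κ)·e^{−ζ(ξ)κ}`. -/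
def Psi (L : EllLattice) (ξ κ : ℂ) : ℂ := L.Phi ξ κ * Complex.exp (-(L.zeta ξ) * κ)

/-- `η_δ(ξ) = ζ(ξ+δ) − ζ(ξ) − ζ(δ)`. -/
def eta (L : EllLattice) (δ ξ : ℂ) : ℂ := L.zeta (ξ + δ) - L.zeta ξ - L.zeta δ

/-- `χ_{α,β}(ξ) = ζ(α) + ζ(β) + ζ(ξ) − ζ(ξ+α+β)`. -/
def chi (L : EllLattice) (α β ξ : ℂ) : ℂ :=
  L.zeta α + L.zeta β + L.zeta ξ - L.zeta (ξ + α + β)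

end EllLattice

open Matrix

/-- All the data entering the elliptic (N,N′)-soliton solutions of the lattice KP system:
a period lattice, lattice parameters `δ, ε, λ`, a base point `ξ₀`, rapidity parameters
`κ_i, κ′_j`, initial plane-wave constants `ρ⁰_i, ν⁰_j` and a constant `N′×N` matrix `C`. -/
structure KPData (N N' : ℕ) where
  L : EllLattice
  del : ℂ
  eps : ℂ
  lam : ℂ
  xi0 : ℂ
  κ : Fin N → ℂ
  κ' : Fin N' → ℂ
  ρ0 : Fin N → ℂ
  ν0 : Fin N' → ℂ
  C : Matrix (Fin N') (Fin N) ℂ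

namespace KPData

variable {N N' : ℕ}

/-- `ξ = ξ₀ + nδ + mε + hλ`. -/
def xi (D : KPData N N') (n m h : ℤ) : ℂ :=
  D.xi0 + n • D.del + m • D.eps + h • D.lam

/-- The plane-wave factor `ρ_i(n,m,h)`. -/
def ρ (D : KPData N N') (i : Fin N) (n m h : ℤ) : ℂ :=
  (Complex.exp (-(D.L.zeta D.del) * D.κ i) * D.L.Psi D.del (-(D.κ i))) ^ n *
  (Complex.exp (-(D.L.zeta D.eps) * D.κ i) * D.L.Psi D.eps (-(D.κ i))) ^ m *
  (Complex.exp (-(D.L.zeta D.lam) * D.κ i) * D.L.Psi D.lam (-(D.κ i))) ^ h *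
  Complex.exp (D.L.zeta (D.xi n m h) * D.κ i) * D.ρ0 i

/-- The plane-wave factor `ν_j(n,m,h)`. -/
def ν (D : KPData N N') (j : Fin N') (n m h : ℤ) : ℂ :=
  (Complex.exp (D.L.zeta D.del * D.κ' j) * D.L.Psi D.del (D.κ' j)) ^ (-n) *
  (Complex.exp (D.L.zeta D.eps * D.κ' j) * D.L.Psi D.eps (D.κ' j)) ^ (-m) *
  (Complex.exp (D.L.zeta D.lam * D.κ' j) * D.L.Psi D.lam (D.κ' j)) ^ (-h) *
  Complex.exp (D.L.zeta (D.xi n m h) * D.κ' j) * D.ν0 j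

/-- The dressed elliptic Cauchy matrix `M_{ij} = ρ_i Ψ_ξ(κ_i + κ′_j) ν_j`. -/
def M (D : KPData N N') (n m h : ℤ) : Matrix (Fin N) (Fin N') ℂ :=
  Matrix.of fun i j => D.ρ i n m h * D.L.Psi (D.xi n m h) (D.κ i + D.κ' j) * D.ν j n m h

/-- The column vector `r = (ρ_i Ψ_ξ(κ_i))_i`. -/
def r (D : KPData N N') (n m h : ℤ) : Fin N → ℂ :=
  fun i => D.ρ i n m h * D.L.Psi (D.xi n m h) (D.κ i)

/-- The column vector `s = (ν_j Ψ_ξ(κ′_j))_j`. -/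
def s (D : KPData N N') (n m h : ℤ) : Fin N' → ℂ :=
  fun j => D.ν j n m h * D.L.Psi (D.xi n m h) (D.κ' j)

/-- The τ-function `τ = det(1 + MC)`. -/
def τ (D : KPData N N') (n m h : ℤ) : ℂ := (1 + D.M n m h * D.C).det

/-- The diagonal matrix `χ_{α,K}(ξ) = diag(χ_{α,κ_i}(ξ))`. -/
def DK (D : KPData N N') (α : ℂ) (n m h : ℤ) : Matrix (Fin N) (Fin N) ℂ :=
  Matrix.diagonal fun i => D.L.chi α (D.κ i) (D.xi n m h)

/-- The diagonal matrix `χ_{β,K′}(ξ) = diag(χ_{β,κ′_j}(ξ))`. -/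
def DK' (D : KPData N N') (β : ℂ) (n m h : ℤ) : Matrix (Fin N') (Fin N') ℂ :=
  Matrix.diagonal fun j => D.L.chi β (D.κ' j) (D.xi n m h)

/-- `W_β = 1 − sᵀ (χ_{β,K′}(ξ))⁻¹ C (1+MC)⁻¹ r`. -/
def W (D : KPData N N') (β : ℂ) (n m h : ℤ) : ℂ :=
  1 - D.s n m h ⬝ᵥ ((D.DK' β n m h)⁻¹ *ᵥ (D.C *ᵥ ((1 + D.M n m h * D.C)⁻¹ *ᵥ D.r n m h)))

/-- `V_α = 1 − sᵀ (1+CM)⁻¹ C (χ_{α,K}(ξ))⁻¹ r`. -/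
def V (D : KPData N N') (α : ℂ) (n m h : ℤ) : ℂ :=
  1 - D.s n m h ⬝ᵥ ((1 + D.C * D.M n m h)⁻¹ *ᵥ (D.C *ᵥ ((D.DK α n m h)⁻¹ *ᵥ D.r n m h)))

/-- `w₀ = sᵀ C (1+MC)⁻¹ r`. -/
def w0 (D : KPData N N') (n m h : ℤ) : ℂ :=
  D.s n m h ⬝ᵥ (D.C *ᵥ ((1 + D.M n m h * D.C)⁻¹ *ᵥ D.r n m h))

/-- `w = ζ(ξ) − w₀ − nζ(δ) − mζ(ε) − hζ(λ)`. -/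
def w (D : KPData N N') (n m h : ℤ) : ℂ :=
  D.L.zeta (D.xi n m h) - D.w0 n m h - n • D.L.zeta D.del - m • D.L.zeta D.eps -
    h • D.L.zeta D.lam

/-- `S_{β,α} = sᵀ (χ_{β,K′}(ξ))⁻¹ C (1+MC)⁻¹ (χ_{α,K}(ξ))⁻¹ r`. -/
def S (D : KPData N N') (β α : ℂ) (n m h : ℤ) : ℂ :=
  D.s n m h ⬝ᵥ ((D.DK' β n m h)⁻¹ *ᵥ
    (D.C *ᵥ ((1 + D.M n m h * D.C)⁻¹ *ᵥ ((D.DK α n m h)⁻¹ *ᵥ D.r n m h))))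

/-- `u_α = (1+MC)⁻¹ (χ_{α,K}(ξ))⁻¹ r`. -/
def u (D : KPData N N') (α : ℂ) (n m h : ℤ) : Fin N → ℂ :=
  (1 + D.M n m h * D.C)⁻¹ *ᵥ ((D.DK α n m h)⁻¹ *ᵥ D.r n m h)

/-- `u₀ = (1+MC)⁻¹ r`. -/
def u0 (D : KPData N N') (n m h : ℤ) : Fin N → ℂ :=
  (1 + D.M n m h * D.C)⁻¹ *ᵥ D.r n m h

/-- the adjoint (row) vector `ᵗu_β = sᵀ (χ_{β,K′}(ξ))⁻¹ (1+CM)⁻¹`. -/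
def tu (D : KPData N N') (β : ℂ) (n m h : ℤ) : Fin N' → ℂ :=
  (D.s n m h ᵥ* (D.DK' β n m h)⁻¹) ᵥ* (1 + D.C * D.M n m h)⁻¹

/-- the adjoint (row) vector `ᵗu₀ = sᵀ (1+CM)⁻¹`. -/
def tu0 (D : KPData N N') (n m h : ℤ) : Fin N' → ℂ :=
  D.s n m h ᵥ* (1 + D.C * D.M n m h)⁻¹

/-- The gauge variable `𝒱_α = Φ_ξ(α)·V_α`. -/
def calV (D : KPData N N') (α : ℂ) (n m h : ℤ) : ℂ :=
  D.L.Phi (D.xi n m h) α * D.V α n m h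

/-- The gauge variable `𝒲_β = Φ_ξ(β)·W_β`. -/
def calW (D : KPData N N') (β : ℂ) (n m h : ℤ) : ℂ :=
  D.L.Phi (D.xi n m h) β * D.W β n m h

/-- The Schwarzian variable `Z_{β,α} = Φ_ξ(α+β)·(1 − χ_{α,β}(ξ)·S_{β,α})`. -/
def Z (D : KPData N N') (β α : ℂ) (n m h : ℤ) : ℂ :=
  D.L.Phi (D.xi n m h) (α + β) * (1 - D.L.chi α β (D.xi n m h) * D.S β α n m h)

/-- Genericity of the parameters (together with finitely many auxiliary points `extra`):
no nontrivial integer combination of `ξ₀, δ, ε, λ`, the rapidity parameters and the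
auxiliary points lies on the lattice.  In particular all arguments of `σ` occurring in
the soliton solutions and their shifts lie outside `Λ`. -/
def Generic {P : ℕ} (D : KPData N N') (extra : Fin P → ℂ) : Prop :=
  ∀ (c0 cn cm ch : ℤ) (a : Fin N → ℤ) (b : Fin N' → ℤ) (e : Fin P → ℤ),
    ¬ (c0 = 0 ∧ cn = 0 ∧ cm = 0 ∧ ch = 0 ∧ a = 0 ∧ b = 0 ∧ e = 0) →
    ¬ D.L.mem (c0 • D.xi0 + cn • D.del + cm • D.eps + ch • D.lam +
      (∑ i, a i • D.κ i) + (∑ j, b j • D.κ' j) + ∑ t, e t • extra t)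

end KPData


namespace EllLattice
open Filter Topology

/-- the associated Mathlib period pair -/
def pp (L : EllLattice) : PeriodPair where
  ω₁ := L.ω₁
  ω₂ := L.ω₂
  indep := by
    rw [LinearIndependent.pair_iff]
    intro s t h
    exact L.indep s t h

lemma mem_iff (L : EllLattice) (z : ℂ) : L.mem z ↔ z ∈ L.pp.lattice := by
  rw [PeriodPair.mem_lattice]
  simp only [mem, pp, zsmul_eq_mul]
  constructor
  · rintro ⟨m, n, h⟩; exact ⟨m, n, h.symm⟩
  · rintro ⟨m, n, h⟩; exact ⟨m, n, h.symm⟩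

/-- elementary factor -/
def fac (l z : ℂ) : ℂ := (1 - z / l) * Complex.exp (z / l + z ^ 2 / (2 * l ^ 2))

lemma fac_zero_left (z : ℂ) : fac 0 z = 1 := by simp [fac]
lemma fac_zero_right (l : ℂ) : fac l 0 = 1 := by simp [fac]
lemma fac_neg (l z : ℂ) : fac (-l) (-z) = fac l z := by
  simp [fac]

/-- the product part of sigma -/
def sP (L : EllLattice) (z : ℂ) : ℂ := ∏' l : L.pp.lattice, fac l z

lemma sigma_eq (L : EllLattice) (z : ℂ) : L.sigma z = z * L.sP z := by
  have h1 : (∏' p : {p : ℤ × ℤ // p ≠ 0}, fac (L.per p.1) z) = ∏' p : ℤ × ℤ, fac (L.per p) z := by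
    refine tprod_subtype_eq_of_mulSupport_subset (s := {p : ℤ × ℤ | p ≠ 0})
      (f := fun p => fac (L.per p) z) ?_
    intro p hp
    simp only [Set.mem_ofPred_eq]
    rintro rfl
    apply hp
    simp [per, fac]
  have h2 : (∏' p : ℤ × ℤ, fac (L.per p) z) = L.sP z := by
    rw [sP, ← (L.pp.latticeEquivProd.symm.toEquiv).tprod_eq]
    refine tprod_congr fun p => ?_
    congr 1
    simp only [LinearEquiv.coe_toEquiv, L.pp.latticeEquiv_symm_apply]
    simp [per, pp]
  rw [sigma, ← h2, ← h1]
  rfl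

lemma fac_bound_aux (u : ℂ) (hu : ‖u‖ ≤ 1 / 2) :
    ‖(1 - u) * Complex.exp (u + u ^ 2 / 2) - 1‖ ≤ 2 * ‖u‖ ^ 3 := by
  set v := u + u ^ 2 / 2 with hv
  have hv1 : ‖v‖ ≤ 5 / 4 * ‖u‖ := by
    calc ‖v‖ ≤ ‖u‖ + ‖u ^ 2 / 2‖ := norm_add_le _ _
      _ = ‖u‖ + ‖u‖ ^ 2 / 2 := by simp
      _ ≤ _ := by nlinarith [norm_nonneg u]
  have hv2 : ‖v‖ ≤ 1 := by linarith
  have hb := Complex.exp_bound hv2 (n := 3) (by norm_num)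
  simp only [Finset.sum_range_succ, Finset.sum_range_zero, Nat.factorial] at hb
  norm_num at hb
  have key : (1 - u) * Complex.exp v - 1 =
      (1 - u) * (Complex.exp v - (1 + v + v ^ 2 / 2)) - u ^ 3 * (1 / 2 + 3 * u / 8 + u ^ 2 / 8) := by
    rw [hv]; ring
  rw [key]
  have h3 : ‖1 - u‖ ≤ 3 / 2 := by
    have := norm_sub_le (1 : ℂ) u
    simp at this; linarith
  have h4 : ‖(1 / 2 + 3 * u / 8 + u ^ 2 / 8 : ℂ)‖ ≤ 1 := by
    calc ‖(1 / 2 + 3 * u / 8 + u ^ 2 / 8 : ℂ)‖ ≤ ‖(1 / 2 + 3 * u / 8 : ℂ)‖ + ‖u ^ 2 / 8‖ := norm_add_le _ _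
      _ ≤ ‖(1 / 2 : ℂ)‖ + ‖3 * u / 8‖ + ‖u ^ 2 / 8‖ := by gcongr; exact norm_add_le _ _
      _ = 1 / 2 + 3 * ‖u‖ / 8 + ‖u‖ ^ 2 / 8 := by simp
      _ ≤ 1 := by nlinarith [norm_nonneg u]
  have h5 : ‖v‖ ^ 3 ≤ (5 / 4 * ‖u‖) ^ 3 := by gcongr
  calc _ ≤ ‖(1 - u) * (Complex.exp v - (1 + v + v ^ 2 / 2))‖ +
        ‖u ^ 3 * (1 / 2 + 3 * u / 8 + u ^ 2 / 8)‖ := norm_sub_le _ _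
    _ = ‖1 - u‖ * ‖Complex.exp v - (1 + v + v ^ 2 / 2)‖ +
        ‖u‖ ^ 3 * ‖(1 / 2 + 3 * u / 8 + u ^ 2 / 8 : ℂ)‖ := by rw [norm_mul, norm_mul, norm_pow]
    _ ≤ 3 / 2 * ((5 / 4 * ‖u‖) ^ 3 * (2 / 9)) + ‖u‖ ^ 3 * 1 := by
        gcongr
        exact hb.trans (by nlinarith)
    _ ≤ 2 * ‖u‖ ^ 3 := by nlinarith [pow_nonneg (norm_nonneg u) 3]

lemma fac_bound (r : ℝ) (hr : 0 < r) (z : ℂ) (hz : ‖z‖ ≤ r) (l : ℂ) (hl : 2 * r ≤ ‖l‖) :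
    ‖fac l z - 1‖ ≤ 2 * r ^ 3 * ‖l‖ ^ (-3 : ℝ) := by
  have hl0 : 0 < ‖l‖ := by linarith
  have e : fac l z = (1 - z / l) * Complex.exp (z / l + (z / l) ^ 2 / 2) := by
    rw [fac]; congr 3; rw [div_pow, div_div, mul_comm (2 : ℂ)]
  rw [e]
  refine (fac_bound_aux _ ?_).trans ?_
  · rw [norm_div, div_le_iff₀ hl0]; linarith
  · rw [norm_div, div_pow]
    have : ‖l‖ ^ (-3 : ℝ) = (‖l‖ ^ 3)⁻¹ := by norm_cast
    rw [this, div_eq_mul_inv, mul_assoc]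
    gcongr

lemma summable_norm (L : EllLattice) : Summable fun l : L.pp.lattice => ‖l‖ ^ (-3 : ℝ) :=
  ZLattice.summable_norm_rpow _ _ (by simp; norm_num)

lemma cofinite_big (L : EllLattice) (r : ℝ) : ∀ᶠ l : L.pp.lattice in cofinite, r ≤ ‖(l : ℂ)‖ := by
  refine (isCompact_iff_finite.mp (isCompact_closedBall (0 : L.pp.lattice) r)).subset ?_
  intro l hl
  simp only [Set.mem_compl_iff, Set.mem_ofPred_eq, not_le] at hl
  simpa using hl.le

lemma fac_differentiable (l : ℂ) : Differentiable ℂ (fac l) := by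
  unfold fac
  simp only [div_eq_mul_inv]
  fun_prop

lemma mult_loc (L : EllLattice) (r : ℝ) (hr : 0 < r) :
    MultipliableLocallyUniformlyOn (fun (l : L.pp.lattice) z => fac l z) (Metric.ball 0 r) := by
  have := Summable.multipliableLocallyUniformlyOn_one_add (K := Metric.ball (0 : ℂ) r)
    (f := fun (l : L.pp.lattice) z => fac l z - 1)
    (u := fun l => 2 * r ^ 3 * ‖l‖ ^ (-3 : ℝ)) Metric.isOpen_ball (L.summable_norm.mul_left _) ?_ ?_
  · simpa using this
  · filter_upwards [L.cofinite_big (2 * r)] with l hl z hz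
    exact fac_bound r hr z (by simpa using (Metric.mem_ball.mp hz).le) l hl
  · intro l
    exact ((fac_differentiable l).continuous.sub continuous_const).continuousOn

lemma sP_differentiable (L : EllLattice) : Differentiable ℂ L.sP := by
  intro z
  have hr : 0 < ‖z‖ + 1 := by positivity
  have h := (L.mult_loc _ hr).hasProdLocallyUniformlyOn
  rw [hasProdLocallyUniformlyOn_iff_tendstoLocallyUniformlyOn] at h
  have := h.differentiableOn (.of_forall fun s => ?_) Metric.isOpen_ball
  · exact this.differentiableAt (Metric.isOpen_ball.mem_nhds (by simp))
  · refine DifferentiableOn.fun_finsetProd fun i _ => (fac_differentiable _).differentiableOn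

lemma summable_fac (L : EllLattice) (z : ℂ) :
    Summable fun l : L.pp.lattice => ‖fac l z - 1‖ := by
  have hr : 0 < ‖z‖ + 1 := by positivity
  refine Summable.of_norm_bounded_eventually (g := fun l : L.pp.lattice => 2 * (‖z‖ + 1) ^ 3 * ‖l‖ ^ (-3 : ℝ))
    (L.summable_norm.mul_left _) ?_
  filter_upwards [L.cofinite_big (2 * (‖z‖ + 1))] with l hl
  rw [norm_norm]
  exact fac_bound _ hr z (by linarith) l hl

lemma fac_eq_zero (l z : ℂ) : fac l z = 0 ↔ l ≠ 0 ∧ z = l := by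
  rw [fac, mul_eq_zero, or_iff_left (Complex.exp_ne_zero _)]
  by_cases h : l = 0
  · simp [h]
  · rw [sub_eq_zero, eq_comm, div_eq_one_iff_eq h]
    simp [h]

lemma sP_ne_zero (L : EllLattice) (z : ℂ) (h : ∀ l ∈ L.pp.lattice, l ≠ 0 → z ≠ l) : L.sP z ≠ 0 := by
  have := tprod_one_add_ne_zero_of_summable (f := fun l : L.pp.lattice => fac l z - 1) ?_ (L.summable_fac z)
  · simpa [sP] using this
  · intro l h0
    have : fac l z = 0 := by simpa using h0
    rw [fac_eq_zero] at this
    exact h l l.2 this.1 this.2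

lemma sP_zero (L : EllLattice) : L.sP 0 = 1 := by simp [sP, fac_zero_right]

lemma sP_neg (L : EllLattice) (z : ℂ) : L.sP (-z) = L.sP z := by
  rw [sP, sP, ← (Equiv.neg L.pp.lattice).tprod_eq]
  refine tprod_congr fun l => ?_
  simp [fac_neg]

lemma sigma_differentiable (L : EllLattice) : Differentiable ℂ L.sigma := by
  have : L.sigma = fun z => z * L.sP z := funext L.sigma_eq
  rw [this]
  exact differentiable_id.mul L.sP_differentiable

lemma sigma_neg (L : EllLattice) (z : ℂ) : L.sigma (-z) = - L.sigma z := by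
  rw [sigma_eq, sigma_eq, sP_neg]; ring

lemma sigma_eq_zero (L : EllLattice) (z : ℂ) : L.sigma z = 0 ↔ z ∈ L.pp.lattice := by
  rw [sigma_eq, mul_eq_zero]
  constructor
  · rintro (rfl | h)
    · exact zero_mem _
    · by_contra hz
      refine L.sP_ne_zero z ?_ h
      rintro l hl - rfl
      exact hz hl
  · intro hz
    by_cases h0 : z = 0
    · exact .inl h0
    · refine .inr (tprod_of_exists_eq_zero ⟨⟨z, hz⟩, ?_⟩)
      rw [fac_eq_zero]
      exact ⟨h0, rfl⟩

lemma sigma_zero (L : EllLattice) : L.sigma 0 = 0 := by simp [sigma_eq]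

lemma deriv_sigma_zero (L : EllLattice) : deriv L.sigma 0 = 1 := by
  have : L.sigma = fun z => z * L.sP z := funext L.sigma_eq
  rw [this]
  have h := (hasDerivAt_id (0 : ℂ)).mul (L.sP_differentiable 0).hasDerivAt
  have := h.deriv
  simpa [sP_zero, Pi.mul_def] using this
end EllLattice

namespace EllLattice
open Filter Topology

lemma zeta_eq_logDeriv (L : EllLattice) (z : ℂ) : L.zeta z = logDeriv L.sigma z := rfl

/-- summand of the zeta series -/
def zt (l z : ℂ) : ℂ := if l = 0 then 0 else 1 / (z - l) + 1 / l + z / l ^ 2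

lemma logDeriv_fac (l z : ℂ) (h : z ≠ l) : logDeriv (fac l) z = zt l z := by
  by_cases hl : l = 0
  · subst hl
    have : fac 0 = fun _ => 1 := funext fac_zero_left
    simp [this, zt, logDeriv]
  · have hsub : z - l ≠ 0 := sub_ne_zero.mpr h
    have h1 : HasDerivAt (fun z : ℂ => 1 - z / l) (-(1 / l)) z := by
      simpa using ((hasDerivAt_id z).div_const l).const_sub 1
    have h2 : HasDerivAt (fun z : ℂ => z / l + z ^ 2 / (2 * l ^ 2)) (1 / l + z / l ^ 2) z := by
      have := ((hasDerivAt_id z).div_const l).add (((hasDerivAt_id z).pow 2).div_const (2 * l ^ 2))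
      convert! this using 1
      simp; field_simp
    have h3 := h1.mul h2.cexp
    have h4 : HasDerivAt (fac l) _ z := h3
    rw [logDeriv_apply, h4.deriv, zt, if_neg hl, fac]
    have he := Complex.exp_ne_zero (z / l + z ^ 2 / (2 * l ^ 2))
    have h5 : 1 - z / l ≠ 0 := by
      rw [sub_ne_zero, ne_comm, ne_eq, div_eq_one_iff_eq hl]; exact h
    have h6 : 1 - z / l = - (z - l) / l := by field_simp; ring
    rw [h6] at h5 ⊢
    generalize Complex.exp (z / l + z ^ 2 / (2 * l ^ 2)) = E at *
    field_simp
    ring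

lemma zt_bound (r : ℝ) (hr : 0 < r) (z : ℂ) (hz : ‖z‖ ≤ r) (l : ℂ) (hl : 2 * r ≤ ‖l‖) :
    ‖zt l z‖ ≤ 2 * r ^ 2 * ‖l‖ ^ (-3 : ℝ) := by
  have hl0 : 0 < ‖l‖ := by linarith
  have hl1 : l ≠ 0 := norm_pos_iff.mp hl0
  have hzl : ‖l‖ / 2 ≤ ‖z - l‖ := by
    have := norm_sub_norm_le l z
    rw [norm_sub_rev] at this
    linarith
  have hzl' : z - l ≠ 0 := norm_pos_iff.mp (by linarith)
  have e : zt l z = z ^ 2 / (l ^ 2 * (z - l)) := by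
    rw [zt, if_neg hl1]; field_simp; ring
  have : ‖l‖ ^ (-3 : ℝ) = (‖l‖ ^ 3)⁻¹ := by norm_cast
  rw [e, this, norm_div, norm_mul, norm_pow, norm_pow]
  calc ‖z‖ ^ 2 / (‖l‖ ^ 2 * ‖z - l‖) ≤ r ^ 2 / (‖l‖ ^ 2 * (‖l‖ / 2)) := by gcongr
    _ = _ := by field_simp

lemma summable_zt (L : EllLattice) (z : ℂ) : Summable fun l : L.pp.lattice => zt l z := by
  have hr : 0 < ‖z‖ + 1 := by positivity
  refine Summable.of_norm_bounded_eventually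
    (g := fun l : L.pp.lattice => 2 * (‖z‖ + 1) ^ 2 * ‖l‖ ^ (-3 : ℝ))
    (L.summable_norm.mul_left _) ?_
  filter_upwards [L.cofinite_big (2 * (‖z‖ + 1))] with l hl
  exact zt_bound _ hr z (by linarith) l hl

lemma zeta_eq (L : EllLattice) (z : ℂ) (hz : z ∉ L.pp.lattice) :
    L.zeta z = 1 / z + ∑' l : L.pp.lattice, zt l z := by
  have hz0 : z ≠ 0 := by rintro rfl; exact hz (zero_mem _)
  have hne : ∀ l : L.pp.lattice, z ≠ l := by rintro l rfl; exact hz l.2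
  have hP : L.sP z ≠ 0 := L.sP_ne_zero z fun l hl _ => hne ⟨l, hl⟩
  have hs : L.sigma = fun z => z * L.sP z := funext L.sigma_eq
  have hr : 0 < ‖z‖ + 1 := by positivity
  rw [zeta_eq_logDeriv, hs, logDeriv_mul (f := fun z => z) z hz0 hP (by fun_prop) (L.sP_differentiable z)]
  congr 1
  · simp [logDeriv_apply]
  · have := logDeriv_tprod_eq_tsum (s := Metric.ball (0 : ℂ) (‖z‖ + 1)) (x := z)
      (f := fun (l : L.pp.lattice) z => fac l z) Metric.isOpen_ball (by simp) ?_ ?_ ?_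
      (L.mult_loc _ hr) hP
    · refine this.trans (tsum_congr fun l => logDeriv_fac _ _ (hne l))
    · intro l h0
      exact hne l ((fac_eq_zero _ _).mp h0).2
    · intro l
      exact (fac_differentiable _).differentiableOn
    · exact (L.summable_zt z).congr fun l => (logDeriv_fac _ _ (hne l)).symm

lemma isOpen_compl (L : EllLattice) : IsOpen ((L.pp.lattice : Set ℂ)ᶜ) :=
  L.pp.isClosed_lattice.isOpen_compl

lemma hasDerivAt_zeta (L : EllLattice) (z : ℂ) (hz : z ∉ L.pp.lattice) :
    HasDerivAt L.zeta (- L.pp.weierstrassP z) z := by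
  have hz0 : z ≠ 0 := by rintro rfl; exact hz (zero_mem _)
  have h1 : HasDerivAt (fun z => ∑' l : L.pp.lattice, zt l z) (- L.pp.weierstrassPExcept 0 z) z := by
    have hT := (L.pp.hasSumLocallyUniformly_weierstrassPExcept 0).hasSumLocallyUniformlyOn
      (s := (L.pp.lattice : Set ℂ)ᶜ)
    rw [hasSumLocallyUniformlyOn_iff_tendstoLocallyUniformlyOn] at hT
    have hT' := hT.neg
    refine hasDerivAt_of_tendstoLocallyUniformlyOn L.isOpen_compl hT'
      (f := fun (s : Finset L.pp.lattice) z => ∑ l ∈ s, zt l z)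
      ?_ (fun y _ => (L.summable_zt y).hasSum) hz
    refine .of_forall fun s y hy => ?_
    simp only [Pi.neg_apply]
    rw [← Finset.sum_neg_distrib]
    refine HasDerivAt.fun_sum fun l _ => ?_
    have hne : y - (l : ℂ) ≠ 0 := by
      rw [sub_ne_zero]; rintro rfl; exact hy l.2
    unfold zt
    split_ifs with hl
    · simpa using hasDerivAt_const y (0 : ℂ)
    · have a1 : HasDerivAt (fun y : ℂ => 1 / (y - l)) (-1 / (y - l) ^ 2) y := by
        simpa using ((hasDerivAt_id y).sub_const (l : ℂ)).fun_inv hne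
      have := (a1.add_const (1 / (l : ℂ))).add ((hasDerivAt_id y).div_const ((l : ℂ) ^ 2))
      convert! this using 1
      ring
  have h2 : HasDerivAt (fun z : ℂ => 1 / z) (-1 / z ^ 2) z := by
    simpa using (hasDerivAt_id z).fun_inv hz0
  have h3 := h2.add h1
  have h4 : -1 / z ^ 2 + -L.pp.weierstrassPExcept 0 z = - L.pp.weierstrassP z := by
    have := L.pp.weierstrassPExcept_add 0 z
    rw [← this]
    simp; ring
  rw [h4] at h3
  refine h3.congr_of_eventuallyEq ?_
  filter_upwards [L.isOpen_compl.mem_nhds hz] with y hy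
  exact L.zeta_eq y hy

lemma compl_conn (L : EllLattice) : IsConnected ((L.pp.lattice : Set ℂ)ᶜ) := by
  refine Set.Countable.isConnected_compl_of_one_lt_rank ?_ ?_
  · rw [Complex.rank_real_complex]; norm_num
  · exact Set.countable_coe_iff.mp (L.pp.latticeEquivProd.toEquiv.countable_iff.mpr inferInstance)

lemma hasDerivAt_sigma (L : EllLattice) (z : ℂ) (hz : z ∉ L.pp.lattice) :
    HasDerivAt L.sigma (L.zeta z * L.sigma z) z := by
  have h := (L.sigma_differentiable z).hasDerivAt
  have h0 : L.sigma z ≠ 0 := by rwa [ne_eq, sigma_eq_zero]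
  have : deriv L.sigma z = L.zeta z * L.sigma z := by
    rw [zeta, div_mul_cancel₀ _ h0]
  rwa [this] at h

lemma quasi (L : EllLattice) (w : ℂ) (hw : w ∈ L.pp.lattice) :
    ∃ c η : ℂ, c ≠ 0 ∧ ∀ z, L.sigma (z + w) = c * Complex.exp (η * z) * L.sigma z := by
  have hadd : ∀ z, z + w ∈ L.pp.lattice ↔ z ∈ L.pp.lattice := fun z =>
    Submodule.add_mem_iff_left _ hw
  have d1 : ∀ z ∈ (L.pp.lattice : Set ℂ)ᶜ, HasDerivAt (fun z => L.zeta (z + w) - L.zeta z) 0 z := by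
    intro z hz
    have hz' : z + w ∉ L.pp.lattice := fun h => hz ((hadd z).mp h)
    have h := ((L.hasDerivAt_zeta _ hz').comp_add_const z w).sub (L.hasDerivAt_zeta z hz)
    have e := L.pp.weierstrassP_add_coe z ⟨w, hw⟩
    simp only at e
    rw [e, sub_self] at h
    exact h
  obtain ⟨η, hη⟩ : ∃ η, ∀ z ∈ (L.pp.lattice : Set ℂ)ᶜ, L.zeta (z + w) - L.zeta z = η :=
    L.isOpen_compl.exists_is_const_of_deriv_eq_zero L.compl_conn.isPreconnected
      (fun z hz => (d1 z hz).differentiableAt.differentiableWithinAt) (fun z hz => (d1 z hz).deriv)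
  have d2 : ∀ z ∈ (L.pp.lattice : Set ℂ)ᶜ,
      HasDerivAt (fun z => L.sigma (z + w) * Complex.exp (-(η * z)) / L.sigma z) 0 z := by
    intro z hz
    have hz' : z + w ∉ L.pp.lattice := fun h => hz ((hadd z).mp h)
    have h0 : L.sigma z ≠ 0 := by rw [ne_eq, sigma_eq_zero]; exact hz
    have a1 := (L.hasDerivAt_sigma _ hz').comp_add_const z w
    have a2 : HasDerivAt (fun z => Complex.exp (-(η * z))) (Complex.exp (-(η * z)) * (-(η * 1))) z :=
      (((hasDerivAt_id z).const_mul η).neg).cexp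
    have h := (a1.mul a2).div (L.hasDerivAt_sigma z hz) h0
    convert! h using 1
    rw [← hη z hz]
    simp only [Pi.mul_apply]
    field_simp
    ring
  obtain ⟨c, hc⟩ : ∃ c, ∀ z ∈ (L.pp.lattice : Set ℂ)ᶜ,
      L.sigma (z + w) * Complex.exp (-(η * z)) / L.sigma z = c :=
    L.isOpen_compl.exists_is_const_of_deriv_eq_zero L.compl_conn.isPreconnected
      (fun z hz => (d2 z hz).differentiableAt.differentiableWithinAt) (fun z hz => (d2 z hz).deriv)
  refine ⟨c, η, ?_, ?_⟩
  · obtain ⟨z, hz⟩ := L.compl_conn.nonempty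
    have hz' : z + w ∉ L.pp.lattice := fun h => hz ((hadd z).mp h)
    rw [← hc z hz]
    refine div_ne_zero (mul_ne_zero ?_ (Complex.exp_ne_zero _)) ?_
    · rwa [ne_eq, sigma_eq_zero]
    · rw [ne_eq, sigma_eq_zero]; exact hz
  · intro z
    by_cases hz : z ∈ L.pp.lattice
    · rw [(L.sigma_eq_zero z).mpr hz, (L.sigma_eq_zero _).mpr ((hadd z).mpr hz), mul_zero]
    · have h0 : L.sigma z ≠ 0 := by rwa [ne_eq, sigma_eq_zero]
      rw [← hc z hz, Complex.exp_neg]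
      have := Complex.exp_ne_zero (η * z)
      field_simp

lemma deriv_sigma_ne_zero (L : EllLattice) (w : ℂ) (hw : w ∈ L.pp.lattice) :
    deriv L.sigma w ≠ 0 := by
  obtain ⟨c, η, hc, h⟩ := L.quasi w hw
  have h1 : HasDerivAt (fun z => L.sigma (z + w)) (deriv L.sigma (0 + w)) 0 :=
    ((L.sigma_differentiable (0 + w)).hasDerivAt).comp_add_const 0 w
  have a2 : HasDerivAt (fun z => c * Complex.exp (η * z)) (c * (Complex.exp (η * 0) * (η * 1))) 0 :=
    (((hasDerivAt_id (0 : ℂ)).const_mul η).cexp).const_mul c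
  have h2 := a2.mul (L.sigma_differentiable 0).hasDerivAt
  have h3 := h1.unique (h2.congr_of_eventuallyEq (.of_forall fun z => h z))
  rw [zero_add, deriv_sigma_zero, sigma_zero] at h3
  rw [h3]
  simpa using hc

end EllLattice

namespace EllLattice
open Filter Topology

lemma liouville (L : EllLattice) (g d : ℂ → ℂ) (hg : Differentiable ℂ g) (hd : Differentiable ℂ d)
    (h0 : ∀ x, d x = 0 → g x = 0) (h1 : ∀ x, d x = 0 → deriv d x ≠ 0)
    (hp : ∀ w ∈ L.pp.lattice, ∃ q : ℂ → ℂ, (∀ x, q x ≠ 0) ∧ (∀ x, g (x + w) = q x * g x) ∧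
      (∀ x, d (x + w) = q x * d x)) : ∃ c, ∀ x, g x = c * d x := by
  classical
  let F : ℂ → ℂ := fun x => if d x = 0 then deriv g x / deriv d x else g x / d x
  have hev : ∀ x, ∀ᶠ y in 𝓝[≠] x, d y ≠ 0 := by
    intro x
    by_cases hx : d x = 0
    · have := (hd x).hasDerivAt.eventually_ne (c := 0) (h1 x hx)
      exact this
    · exact ((hd.continuous.continuousAt).eventually_ne hx).filter_mono nhdsWithin_le_nhds
  have hF : Differentiable ℂ F := by
    intro x
    by_cases hx : d x = 0
    · have a1 : DifferentiableAt ℂ (dslope g x) x :=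
        ((Complex.differentiableOn_dslope (s := Set.univ) univ_mem).mpr hg.differentiableOn).differentiableAt
          univ_mem
      have a2 : DifferentiableAt ℂ (dslope d x) x :=
        ((Complex.differentiableOn_dslope (s := Set.univ) univ_mem).mpr hd.differentiableOn).differentiableAt
          univ_mem
      have a3 : DifferentiableAt ℂ (fun y => dslope g x y / dslope d x y) x :=
        a1.fun_div a2 (by rw [dslope_same]; exact h1 x hx)
      refine a3.congr_of_eventuallyEq ?_
      have := hev x
      rw [eventually_nhdsWithin_iff] at this
      filter_upwards [this] with y hy
      by_cases hyx : y = x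
      · subst hyx
        simp only [F, if_pos hx, dslope_same]
      · have hdy := hy hyx
        simp only [F, if_neg hdy]
        rw [dslope_of_ne _ hyx, dslope_of_ne _ hyx, slope_def_field, slope_def_field, hx, h0 x hx]
        have : y - x ≠ 0 := sub_ne_zero.mpr hyx
        field_simp
        simp [mul_comm]
    · have a3 : DifferentiableAt ℂ (fun y => g y / d y) x := (hg x).fun_div (hd x) hx
      refine a3.congr_of_eventuallyEq ?_
      filter_upwards [(hd.continuous.continuousAt).eventually_ne hx] with y hy
      simp only [F, if_neg hy]
  have hper : ∀ x w, w ∈ L.pp.lattice → F (x + w) = F x := by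
    intro x w hw
    obtain ⟨q, hq, qg, qd⟩ := hp w hw
    have c1 : ContinuousAt (fun y => F (y + w)) x :=
      (hF.continuous.comp (continuous_add_const w)).continuousAt
    have c2 : ContinuousAt F x := hF.continuous.continuousAt
    have e : (fun y => F (y + w)) =ᶠ[𝓝[≠] x] F := by
      filter_upwards [hev x] with y hy
      have hy' : d (y + w) ≠ 0 := by rw [qd]; exact mul_ne_zero (hq y) hy
      simp only [F, if_neg hy, if_neg hy']
      rw [qg, qd, mul_div_mul_left _ _ (hq y)]
    have := (c1.eventuallyEq_nhds_iff_eventuallyEq_nhdsNE c2).mp e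
    exact this.self_of_nhds
  have hconst : ∀ x, F x = F 0 := fun x =>
    hF.apply_eq_apply_of_bounded (IsZLattice.isCompact_range_of_periodic L.pp.lattice _
      hF.continuous fun z w hw => hper z w hw).isBounded x 0
  refine ⟨F 0, fun x => ?_⟩
  by_cases hx : d x = 0
  · rw [hx, h0 x hx, mul_zero]
  · rw [← hconst x]
    simp only [F, if_neg hx]
    field_simp

lemma three_term (L : EllLattice) (ξ a b δ : ℂ) (hδ : δ ∉ L.pp.lattice)
    (hab : a + b ∉ L.pp.lattice) (habδ : a + b - δ ∉ L.pp.lattice) :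
    L.sigma (ξ + a) * L.sigma (ξ + δ + b) * (L.sigma (a + b) * L.sigma δ) -
      L.sigma (ξ + δ + a + b) * L.sigma ξ * (L.sigma (δ - a) * L.sigma b) =
    L.sigma a * L.sigma (δ + b) * (L.sigma (ξ + a + b) * L.sigma (ξ + δ)) := by
  let g : ℂ → ℂ := fun ξ => L.sigma (ξ + a) * L.sigma (ξ + δ + b) * (L.sigma (a + b) * L.sigma δ) -
      L.sigma (ξ + δ + a + b) * L.sigma ξ * (L.sigma (δ - a) * L.sigma b)
  let d : ℂ → ℂ := fun ξ => L.sigma (ξ + a + b) * L.sigma (ξ + δ)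
  have hσ := L.sigma_differentiable
  have hg : Differentiable ℂ g := by
    have hs : ∀ c, Differentiable ℂ fun x => L.sigma (x + c) := fun c => hσ.comp (by fun_prop)
    have hs2 : ∀ c c', Differentiable ℂ fun x => L.sigma (x + c + c') := fun c c' =>
      hσ.comp (by fun_prop)
    have hs3 : ∀ c c' c'', Differentiable ℂ fun x => L.sigma (x + c + c' + c'') := fun c c' c'' =>
      hσ.comp (by fun_prop)
    exact (((hs a).mul (hs2 δ b)).mul_const _).sub (((hs3 δ a b).mul hσ).mul_const _)
  have hd : Differentiable ℂ d := by
    have hs : ∀ c, Differentiable ℂ fun x => L.sigma (x + c) := fun c => hσ.comp (by fun_prop)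
    have hs2 : ∀ c c', Differentiable ℂ fun x => L.sigma (x + c + c') := fun c c' =>
      hσ.comp (by fun_prop)
    exact (hs2 a b).mul (hs δ)
  have hp : ∀ w ∈ L.pp.lattice, ∃ q : ℂ → ℂ, (∀ x, q x ≠ 0) ∧ (∀ x, g (x + w) = q x * g x) ∧
      (∀ x, d (x + w) = q x * d x) := by
    intro w hw
    obtain ⟨c, η, hc, h⟩ := L.quasi w hw
    refine ⟨fun x => c ^ 2 * Complex.exp (η * (2 * x + a + b + δ)), fun x =>
      mul_ne_zero (pow_ne_zero _ hc) (Complex.exp_ne_zero _), fun x => ?_, fun x => ?_⟩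
    · simp only [g]
      have e1 : x + w + a = (x + a) + w := by ring
      have e2 : x + w + δ + b = (x + δ + b) + w := by ring
      have e3 : x + w + δ + a + b = (x + δ + a + b) + w := by ring
      have e4 : Complex.exp (η * (2 * x + a + b + δ)) =
          Complex.exp (η * (x + a)) * Complex.exp (η * (x + δ + b)) := by
        rw [← Complex.exp_add]; congr 1; ring
      have e5 : Complex.exp (η * (2 * x + a + b + δ)) =
          Complex.exp (η * (x + δ + a + b)) * Complex.exp (η * x) := by
        rw [← Complex.exp_add]; congr 1; ring
      rw [e1, e2, e3, h, h, h, h, mul_sub]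
      congr 1
      · rw [e4]; ring
      · rw [e5]; ring
    · simp only [d]
      have e1 : x + w + a + b = (x + a + b) + w := by ring
      have e2 : x + w + δ = (x + δ) + w := by ring
      have e4 : Complex.exp (η * (2 * x + a + b + δ)) =
          Complex.exp (η * (x + a + b)) * Complex.exp (η * (x + δ)) := by
        rw [← Complex.exp_add]; congr 1; ring
      rw [e1, e2, h, h, e4]; ring
  have gA : g (-(a + b)) = 0 := by
    simp only [g]
    have e1 : -(a + b) + a = - b := by ring
    have e2 : -(a + b) + δ + b = δ - a := by ring
    have e3 : -(a + b) + δ + a + b = δ := by ring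
    rw [e1, e2, e3, sigma_neg, sigma_neg]; ring
  have gB : g (-δ) = 0 := by
    simp only [g]
    have e1 : -δ + a = -(δ - a) := by ring
    have e2 : -δ + δ + b = b := by ring
    have e3 : -δ + δ + a + b = a + b := by ring
    rw [e1, e2, e3, sigma_neg, sigma_neg]; ring
  have h0 : ∀ x, d x = 0 → g x = 0 := by
    intro x hx
    rcases mul_eq_zero.mp hx with hx | hx
    · rw [sigma_eq_zero] at hx
      obtain ⟨q, _, qg, _⟩ := hp _ hx
      have := qg (-(a + b))
      rw [gA, mul_zero] at this
      rw [← this]; congr 1; ring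
    · rw [sigma_eq_zero] at hx
      obtain ⟨q, _, qg, _⟩ := hp _ hx
      have := qg (-δ)
      rw [gB, mul_zero] at this
      rw [← this]; congr 1; ring
  have h1 : ∀ x, d x = 0 → deriv d x ≠ 0 := by
    intro x hx
    have d1 : HasDerivAt (fun x => L.sigma (x + a + b)) (deriv L.sigma (x + a + b)) x := by
      have := ((hσ (x + (a + b))).hasDerivAt).comp_add_const x (a + b)
      simpa only [← add_assoc] using this
    have d2 : HasDerivAt (fun x => L.sigma (x + δ)) (deriv L.sigma (x + δ)) x :=
      ((hσ (x + δ)).hasDerivAt).comp_add_const x δ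
    have d3 : deriv d x = _ := (d1.mul d2).deriv
    rw [d3]
    rcases mul_eq_zero.mp hx with hx | hx
    · rw [hx, zero_mul, add_zero]
      rw [sigma_eq_zero] at hx
      refine mul_ne_zero (L.deriv_sigma_ne_zero _ hx) ?_
      rw [ne_eq, sigma_eq_zero]
      intro h
      apply habδ
      have := sub_mem hx h
      convert this using 1; ring
    · rw [hx, mul_zero, zero_add]
      rw [sigma_eq_zero] at hx
      refine mul_ne_zero ?_ (L.deriv_sigma_ne_zero _ hx)
      rw [ne_eq, sigma_eq_zero]
      intro h
      apply habδ
      have := sub_mem h hx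
      convert this using 1; ring
  obtain ⟨c, hc⟩ := L.liouville g d hg hd h0 h1 hp
  have hδ' : L.sigma δ ≠ 0 := by rwa [ne_eq, sigma_eq_zero]
  have hab' : L.sigma (a + b) ≠ 0 := by rwa [ne_eq, sigma_eq_zero]
  have hc0 := hc 0
  simp only [g, d, zero_add, sigma_zero, mul_zero, zero_mul, sub_zero] at hc0
  have hc1 : c = L.sigma a * L.sigma (δ + b) :=
    (mul_right_cancel₀ (mul_ne_zero hab' hδ') hc0).symm
  rw [← hc1]
  exact hc ξ

/-- the zeta-sigma addition formula -/
lemma zeta_add (L : EllLattice) (ξ a δ : ℂ) (hξ : ξ ∉ L.pp.lattice) (hξa : ξ + a ∉ L.pp.lattice)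
    (hξδ : ξ + δ ∉ L.pp.lattice)
    (ha : a ∉ L.pp.lattice) (hδ : δ ∉ L.pp.lattice) (haδ : a - δ ∉ L.pp.lattice) :
    (L.zeta (ξ + a) - L.zeta a + L.zeta δ - L.zeta (ξ + δ)) *
      (L.sigma (ξ + a) * L.sigma (ξ + δ) * L.sigma a * L.sigma δ) =
    - (L.sigma (ξ + δ + a) * L.sigma ξ * L.sigma (δ - a)) := by
  have hσ := L.sigma_differentiable
  have hd : ∀ c, c ∉ L.pp.lattice →
      HasDerivAt (fun b => L.sigma (c + b)) (L.zeta c * L.sigma c) 0 := by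
    intro c hc
    have := (L.hasDerivAt_sigma (c + 0) (by simpa using hc)).comp_const_add c 0
    simpa using this
  have hs0 : HasDerivAt L.sigma 1 0 := by
    have := (hσ 0).hasDerivAt
    rwa [deriv_sigma_zero] at this
  have hl : HasDerivAt (fun b => L.sigma (ξ + δ + a + b)) (deriv L.sigma (ξ + δ + a)) 0 := by
    have := ((hσ (ξ + δ + a + 0)).hasDerivAt).comp_const_add (ξ + δ + a) 0
    simpa using this
  have hL := (((hd _ hξδ).const_mul (L.sigma (ξ + a))).mul ((hd _ ha).mul_const (L.sigma δ))).sub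
    ((hl.mul_const (L.sigma ξ)).mul (hs0.const_mul (L.sigma (δ - a))))
  have hR := ((hd _ hδ).const_mul (L.sigma a)).mul ((hd _ hξa).mul_const (L.sigma (ξ + δ)))
  have hev : ∀ᶠ b in 𝓝 (0 : ℂ), a + b ∉ L.pp.lattice ∧ a + b - δ ∉ L.pp.lattice := by
    have c1 : ContinuousAt (fun b => a + b) (0 : ℂ) := by fun_prop
    have c2 : ContinuousAt (fun b => a + b - δ) (0 : ℂ) := by fun_prop
    refine (c1.eventually_mem (L.isOpen_compl.mem_nhds (by simpa using ha))).and
      (c2.eventually_mem (L.isOpen_compl.mem_nhds (by simpa using haδ)))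
  have hu := hL.unique (hR.congr_of_eventuallyEq ?_)
  · simp only [add_zero, sigma_zero, mul_zero, mul_one, zero_add] at hu
    linear_combination -hu
  · filter_upwards [hev] with b hb
    exact L.three_term ξ a b δ hδ hb.1 hb.2

lemma Phi_three (L : EllLattice) (ξ a b δ : ℂ) (hξ : ξ ∉ L.pp.lattice)
    (hξδ : ξ + δ ∉ L.pp.lattice)
    (ha : a ∉ L.pp.lattice) (hb : b ∉ L.pp.lattice) (hδ : δ ∉ L.pp.lattice)
    (hab : a + b ∉ L.pp.lattice) (habδ : a + b - δ ∉ L.pp.lattice) :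
    L.Phi δ (-a) * L.Phi (ξ + δ) (a + b) =
      L.Phi ξ (a + b) * L.Phi δ b - L.Phi ξ a * L.Phi (ξ + δ) b := by
  have h := L.three_term ξ a b δ hδ hab habδ
  rw [← sigma_eq_zero] at *
  simp only [Phi, sigma_neg, ← add_assoc, ← sub_eq_add_neg]
  field_simp
  linear_combination h

lemma Phi_two (L : EllLattice) (ξ a δ : ℂ) (hξ : ξ ∉ L.pp.lattice) (hξa : ξ + a ∉ L.pp.lattice)
    (hξδ : ξ + δ ∉ L.pp.lattice)
    (ha : a ∉ L.pp.lattice) (hδ : δ ∉ L.pp.lattice) (haδ : a - δ ∉ L.pp.lattice) :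
    L.Phi δ (-a) * L.Phi (ξ + δ) a =
      (L.zeta (ξ + a) - L.zeta a + L.zeta δ - L.zeta (ξ + δ)) * L.Phi ξ a := by
  have h := L.zeta_add ξ a δ hξ hξa hξδ ha hδ haδ
  rw [← sigma_eq_zero] at *
  simp only [Phi, sigma_neg, ← sub_eq_add_neg]
  field_simp
  linear_combination -h

lemma zeta_neg (L : EllLattice) (z : ℂ) : L.zeta (-z) = - L.zeta z := by
  have h : deriv L.sigma (-z) = deriv L.sigma z := by
    have h1 : deriv (fun x => L.sigma (-x)) z = - deriv L.sigma (-z) := deriv_comp_neg _ _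
    have h2 : (fun x => L.sigma (-x)) = fun x => - L.sigma x := funext L.sigma_neg
    rw [h2, deriv.fun_neg] at h1
    exact (neg_injective h1).symm
  rw [zeta, zeta, h, sigma_neg, div_neg]

lemma chi_eq (L : EllLattice) (α β ξ : ℂ) (hξ : ξ ∉ L.pp.lattice)
    (hα : α ∉ L.pp.lattice) (hβ : β ∉ L.pp.lattice) (hαβ : α + β ∉ L.pp.lattice)
    (hξα : ξ + α ∉ L.pp.lattice) (hξβ : ξ + β ∉ L.pp.lattice) (hξαβ : ξ + α + β ∉ L.pp.lattice) :
    L.chi α β ξ * L.Phi ξ (α + β) = L.Phi ξ α * L.Phi ξ β := by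
  have hβ' : -β ∉ L.pp.lattice := by simpa using hβ
  have h := L.zeta_add (ξ + β) (-β) α hξβ (by simpa using hξ) (by convert hξαβ using 1; ring)
    hβ' hα (by
      intro h; apply hαβ
      have := neg_mem h
      convert this using 1; ring)
  have e1 : ξ + β + -β = ξ := by ring
  have e2 : ξ + β + α = ξ + α + β := by ring
  have e3 : ξ + α + β + -β = ξ + α := by ring
  have e4 : α - -β = α + β := by ring
  rw [e1, e2, e3, e4, zeta_neg, sigma_neg] at h
  rw [← sigma_eq_zero] at *
  simp only [Phi, chi, ← add_assoc]
  field_simp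
  linear_combination -h

end EllLattice

namespace KPData
variable {N N' : ℕ}

/-- exponential-free plane wave factor -/
def pR (D : KPData N N') (i : Fin N) (n m h : ℤ) : ℂ :=
  (D.L.Phi D.del (-(D.κ i))) ^ n * (D.L.Phi D.eps (-(D.κ i))) ^ m *
    (D.L.Phi D.lam (-(D.κ i))) ^ h * D.ρ0 i

/-- exponential-free plane wave factor -/
def pN (D : KPData N N') (j : Fin N') (n m h : ℤ) : ℂ :=
  (D.L.Phi D.del (D.κ' j)) ^ (-n) * (D.L.Phi D.eps (D.κ' j)) ^ (-m) *
    (D.L.Phi D.lam (D.κ' j)) ^ (-h) * D.ν0 j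

lemma exp_Psi_neg (L : EllLattice) (d k : ℂ) :
    Complex.exp (-(L.zeta d) * k) * L.Psi d (-k) = L.Phi d (-k) := by
  rw [EllLattice.Psi, mul_left_comm, ← Complex.exp_add]
  have : -(L.zeta d) * k + -(L.zeta d) * -k = 0 := by ring
  rw [this, Complex.exp_zero, mul_one]

lemma exp_Psi (L : EllLattice) (d k : ℂ) :
    Complex.exp (L.zeta d * k) * L.Psi d k = L.Phi d k := by
  rw [EllLattice.Psi, mul_left_comm, ← Complex.exp_add]
  have : L.zeta d * k + -(L.zeta d) * k = 0 := by ring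
  rw [this, Complex.exp_zero, mul_one]

lemma ρ_eq (D : KPData N N') (i : Fin N) (n m h : ℤ) :
    D.ρ i n m h = D.pR i n m h * Complex.exp (D.L.zeta (D.xi n m h) * D.κ i) := by
  rw [ρ, exp_Psi_neg, exp_Psi_neg, exp_Psi_neg, pR]; ring

lemma ν_eq (D : KPData N N') (j : Fin N') (n m h : ℤ) :
    D.ν j n m h = D.pN j n m h * Complex.exp (D.L.zeta (D.xi n m h) * D.κ' j) := by
  rw [ν, exp_Psi, exp_Psi, exp_Psi, pN]; ring

lemma r_eq (D : KPData N N') (n m h : ℤ) (i : Fin N) :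
    D.r n m h i = D.pR i n m h * D.L.Phi (D.xi n m h) (D.κ i) := by
  rw [r, ρ_eq, mul_assoc, exp_Psi]

lemma s_eq (D : KPData N N') (n m h : ℤ) (j : Fin N') :
    D.s n m h j = D.pN j n m h * D.L.Phi (D.xi n m h) (D.κ' j) := by
  rw [s, ν_eq, mul_assoc, exp_Psi]

lemma M_eq (D : KPData N N') (n m h : ℤ) (i : Fin N) (j : Fin N') :
    D.M n m h i j = D.pR i n m h * D.L.Phi (D.xi n m h) (D.κ i + D.κ' j) * D.pN j n m h := by
  rw [M, Matrix.of_apply, ρ_eq, ν_eq, ← exp_Psi D.L (D.xi n m h), mul_add, Complex.exp_add]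
  ring

/-- dressed vector with parameter α -/
def ra (D : KPData N N') (α : ℂ) (n m h : ℤ) : Fin N → ℂ :=
  fun i => D.pR i n m h * D.L.Phi (D.xi n m h) (D.κ i + α)

/-- One elementary lattice step together with the nondegeneracy it needs. -/
structure Step (D : KPData N N') (α d : ℂ) (n m h n' m' h' : ℤ) : Prop where
  xi : D.xi n' m' h' = D.xi n m h + d
  R : ∀ i, D.pR i n' m' h' = D.L.Phi d (-(D.κ i)) * D.pR i n m h
  Nn : ∀ j, D.pN j n m h = D.L.Phi d (D.κ' j) * D.pN j n' m' h'
  gξ : D.xi n m h ∉ D.L.pp.lattice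
  gξd : D.xi n m h + d ∉ D.L.pp.lattice
  gξκ : ∀ i, D.xi n m h + D.κ i ∉ D.L.pp.lattice
  gκ : ∀ i, D.κ i ∉ D.L.pp.lattice
  gκ' : ∀ j, D.κ' j ∉ D.L.pp.lattice
  gα : α ∉ D.L.pp.lattice
  gd : d ∉ D.L.pp.lattice
  gκκ : ∀ i j, D.κ i + D.κ' j ∉ D.L.pp.lattice
  gκκd : ∀ i j, D.κ i + D.κ' j - d ∉ D.L.pp.lattice
  gκα : ∀ i, D.κ i + α ∉ D.L.pp.lattice
  gκαd : ∀ i, D.κ i + α - d ∉ D.L.pp.lattice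
  gκd : ∀ i, D.κ i - d ∉ D.L.pp.lattice

section step
variable {D : KPData N N'} {α d : ℂ} {n m h n' m' h' : ℤ}

lemma Step.hM (S : Step D α d n m h n' m' h') :
    D.M n' m' h' = D.M n m h - Matrix.vecMulVec (D.r n m h) (D.s n' m' h') := by
  ext i j
  have h3 := D.L.Phi_three (D.xi n m h) (D.κ i) (D.κ' j) d S.gξ S.gξd (S.gκ i) (S.gκ' j) S.gd
    (S.gκκ i j) (S.gκκd i j)
  rw [Matrix.sub_apply, Matrix.vecMulVec_apply, M_eq, M_eq, r_eq, s_eq, S.xi, S.R, S.Nn]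
  linear_combination D.pR i n m h * D.pN j n' m' h' * h3

lemma Step.hra (S : Step D α d n m h n' m' h') :
    D.ra α n' m' h' = D.L.Phi d α • D.ra α n m h - D.L.Phi (D.xi n' m' h') α • D.r n m h := by
  ext i
  have h3 := D.L.Phi_three (D.xi n m h) (D.κ i) α d S.gξ S.gξd (S.gκ i) S.gα S.gd
    (S.gκα i) (S.gκαd i)
  simp only [ra, Pi.sub_apply, Pi.smul_apply, smul_eq_mul]
  rw [r_eq, S.xi, S.R]
  linear_combination D.pR i n m h * h3

lemma Step.hr (S : Step D α d n m h n' m' h') (i : Fin N) :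
    D.r n' m' h' i = (D.L.zeta (D.xi n m h + D.κ i) - D.L.zeta (D.κ i) + D.L.zeta d -
      D.L.zeta (D.xi n' m' h')) * D.r n m h i := by
  have h3 := D.L.Phi_two (D.xi n m h) (D.κ i) d S.gξ (S.gξκ i) S.gξd (S.gκ i) S.gd (S.gκd i)
  rw [r_eq, r_eq, S.xi, S.R]
  linear_combination D.pR i n m h * h3

end step

lemma lin_step (M M' : Matrix (Fin N) (Fin N') ℂ) (C : Matrix (Fin N') (Fin N) ℂ)
    (r x : Fin N → ℂ) (s' : Fin N' → ℂ) (hA : IsUnit (1 + M * C).det) (hA' : IsUnit (1 + M' * C).det)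
    (hM : M' = M - Matrix.vecMulVec r s') :
    (1 + M' * C)⁻¹ *ᵥ x = (1 + M * C)⁻¹ *ᵥ x +
      (s' ⬝ᵥ (C *ᵥ ((1 + M' * C)⁻¹ *ᵥ x))) • ((1 + M * C)⁻¹ *ᵥ r) := by
  set y := (1 + M' * C)⁻¹ *ᵥ x with hy
  have h1 : (1 + M' * C) *ᵥ y = x := by
    rw [hy, Matrix.mulVec_mulVec, Matrix.mul_nonsing_inv _ hA', Matrix.one_mulVec]
  have h2 : (1 + M * C) *ᵥ y = x + (s' ⬝ᵥ (C *ᵥ y)) • r := by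
    rw [← h1, hM]
    simp only [Matrix.add_mulVec, Matrix.sub_mul, Matrix.sub_mulVec, ← Matrix.mulVec_mulVec,
      Matrix.vecMulVec_mulVec]
    ext i
    simp [mul_comm]
    ring
  have h3 : y = (1 + M * C)⁻¹ *ᵥ ((1 + M * C) *ᵥ y) := by
    rw [Matrix.mulVec_mulVec, Matrix.nonsing_inv_mul _ hA, Matrix.one_mulVec]
  conv_lhs => rw [h3, h2]
  rw [Matrix.mulVec_add, Matrix.mulVec_smul]

/-- dressed eigenvector -/
def ua (D : KPData N N') (α : ℂ) (n m h : ℤ) : Fin N → ℂ :=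
  (1 + D.M n m h * D.C)⁻¹ *ᵥ D.ra α n m h

lemma calV_eq (D : KPData N N') (α : ℂ) (n m h : ℤ) (hInv : IsUnit (1 + D.M n m h * D.C).det)
    (hχ : ∀ i, D.L.chi α (D.κ i) (D.xi n m h) ≠ 0)
    (hid : ∀ i, D.L.chi α (D.κ i) (D.xi n m h) * D.L.Phi (D.xi n m h) (D.κ i + α) =
      D.L.Phi (D.xi n m h) α * D.L.Phi (D.xi n m h) (D.κ i)) :
    D.calV α n m h = D.L.Phi (D.xi n m h) α - D.s n m h ⬝ᵥ (D.C *ᵥ D.ua α n m h) := by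
  have hdet : IsUnit (D.DK α n m h).det := by
    rw [DK, Matrix.det_diagonal, isUnit_iff_ne_zero]
    exact Finset.prod_ne_zero_iff.mpr fun i _ => hχ i
  have h1 : D.L.Phi (D.xi n m h) α • D.r n m h = D.DK α n m h *ᵥ D.ra α n m h := by
    ext i
    rw [DK, Matrix.mulVec_diagonal, Pi.smul_apply, smul_eq_mul, r_eq, ra]
    linear_combination -(D.pR i n m h) * hid i
  have h2 : D.L.Phi (D.xi n m h) α • ((D.DK α n m h)⁻¹ *ᵥ D.r n m h) = D.ra α n m h := by
    rw [← Matrix.mulVec_smul, h1, Matrix.mulVec_mulVec, Matrix.nonsing_inv_mul _ hdet,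
      Matrix.one_mulVec]
  have hB : IsUnit (1 + D.C * D.M n m h).det := by
    rwa [Matrix.det_one_add_mul_comm]
  have h3 : (1 + D.C * D.M n m h)⁻¹ * D.C = D.C * (1 + D.M n m h * D.C)⁻¹ := by
    have e : D.C * (1 + D.M n m h * D.C) = (1 + D.C * D.M n m h) * D.C := by
      rw [Matrix.mul_add, Matrix.add_mul, Matrix.mul_assoc]; simp
    calc (1 + D.C * D.M n m h)⁻¹ * D.C
        = (1 + D.C * D.M n m h)⁻¹ * (D.C * (1 + D.M n m h * D.C)) * (1 + D.M n m h * D.C)⁻¹ := by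
          rw [Matrix.mul_assoc, Matrix.mul_assoc, Matrix.mul_nonsing_inv _ hInv, Matrix.mul_one]
      _ = _ := by
          rw [e, ← Matrix.mul_assoc, Matrix.nonsing_inv_mul _ hB, Matrix.one_mul]
  rw [calV, V, mul_sub, mul_one, ua, ← h2]
  congr 1
  rw [Matrix.mulVec_smul, Matrix.mulVec_smul, dotProduct_smul, smul_eq_mul]
  congr 2
  rw [Matrix.mulVec_mulVec, h3, ← Matrix.mulVec_mulVec]

section generic
variable {D : KPData N N'} {α : ℂ}

lemma Generic.g0 (hg : D.Generic ![α]) (c0 cn cm ch e : ℤ) (z : ℂ)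
    (hne : ¬ (c0 = 0 ∧ cn = 0 ∧ cm = 0 ∧ ch = 0 ∧ e = 0))
    (hz : z = c0 * D.xi0 + cn * D.del + cm * D.eps + ch * D.lam + e * α) :
    z ∉ D.L.pp.lattice := by
  have := hg c0 cn cm ch 0 0 ![e] (by
    rintro ⟨h1, h2, h3, h4, -, -, h5⟩
    exact hne ⟨h1, h2, h3, h4, by simpa using congrFun h5 0⟩)
  rw [EllLattice.mem_iff] at this
  convert this using 2
  rw [hz]; simp

lemma Generic.gi (hg : D.Generic ![α]) (i : Fin N) (c0 cn cm ch p e : ℤ) (z : ℂ)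
    (hp : p ≠ 0)
    (hz : z = c0 * D.xi0 + cn * D.del + cm * D.eps + ch * D.lam + p * D.κ i + e * α) :
    z ∉ D.L.pp.lattice := by
  have := hg c0 cn cm ch (Pi.single i p) 0 ![e] (by
    rintro ⟨h1, h2, h3, h4, h6, -, h5⟩
    exact hp (by simpa using congrFun h6 i))
  rw [EllLattice.mem_iff] at this
  convert this using 2
  rw [hz]; simp [Pi.single_apply]

lemma Generic.gj (hg : D.Generic ![α]) (j : Fin N') (c0 cn cm ch q e : ℤ) (z : ℂ)
    (hq : q ≠ 0)
    (hz : z = c0 * D.xi0 + cn * D.del + cm * D.eps + ch * D.lam + q * D.κ' j + e * α) :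
    z ∉ D.L.pp.lattice := by
  have := hg c0 cn cm ch 0 (Pi.single j q) ![e] (by
    rintro ⟨h1, h2, h3, h4, -, h6, h5⟩
    exact hq (by simpa using congrFun h6 j))
  rw [EllLattice.mem_iff] at this
  convert this using 2
  rw [hz]; simp [Pi.single_apply]

lemma Generic.gij (hg : D.Generic ![α]) (i : Fin N) (j : Fin N') (c0 cn cm ch p q e : ℤ) (z : ℂ)
    (hp : p ≠ 0)
    (hz : z = c0 * D.xi0 + cn * D.del + cm * D.eps + ch * D.lam + p * D.κ i + q * D.κ' j + e * α) :
    z ∉ D.L.pp.lattice := by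
  have := hg c0 cn cm ch (Pi.single i p) (Pi.single j q) ![e] (by
    rintro ⟨h1, h2, h3, h4, h6, -, h5⟩
    exact hp (by simpa using congrFun h6 i))
  rw [EllLattice.mem_iff] at this
  convert this using 2
  rw [hz]; simp [Pi.single_apply]

lemma Phi_ne_zero (L : EllLattice) (x y : ℂ) (hx : x ∉ L.pp.lattice) (hy : y ∉ L.pp.lattice)
    (hxy : x + y ∉ L.pp.lattice) : L.Phi x y ≠ 0 := by
  rw [← EllLattice.sigma_eq_zero] at *
  exact div_ne_zero hxy (mul_ne_zero hx hy)

lemma Generic.xi (hg : D.Generic ![α]) (n m h : ℤ) : D.xi n m h ∉ D.L.pp.lattice :=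
  hg.g0 1 n m h 0 _ (by simp) (by simp [KPData.xi])

lemma Generic.al (hg : D.Generic ![α]) : α ∉ D.L.pp.lattice :=
  hg.g0 0 0 0 0 1 _ (by simp) (by simp)

lemma Generic.κ (hg : D.Generic ![α]) (i : Fin N) : D.κ i ∉ D.L.pp.lattice :=
  hg.gi i 0 0 0 0 1 0 _ (by simp) (by simp)

lemma Generic.κ' (hg : D.Generic ![α]) (j : Fin N') : D.κ' j ∉ D.L.pp.lattice :=
  hg.gj j 0 0 0 0 1 0 _ (by simp) (by simp)

lemma Generic.del (hg : D.Generic ![α]) : D.del ∉ D.L.pp.lattice :=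
  hg.g0 0 1 0 0 0 _ (by simp) (by simp)

lemma Generic.eps (hg : D.Generic ![α]) : D.eps ∉ D.L.pp.lattice :=
  hg.g0 0 0 1 0 0 _ (by simp) (by simp)

lemma Generic.lam (hg : D.Generic ![α]) : D.lam ∉ D.L.pp.lattice :=
  hg.g0 0 0 0 1 0 _ (by simp) (by simp)

lemma Generic.stepn (hg : D.Generic ![α]) (n m h : ℤ) : Step D α D.del n m h (n + 1) m h where
  xi := by simp [KPData.xi]; ring
  R i := by
    have : D.L.Phi D.del (-(D.κ i)) ≠ 0 := Phi_ne_zero _ _ _ hg.del (by simpa using hg.κ i)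
      (hg.gi i 0 1 0 0 (-1) 0 _ (by simp) (by simp))
    rw [pR, pR, zpow_add_one₀ this]; ring
  Nn j := by
    have : D.L.Phi D.del (D.κ' j) ≠ 0 := Phi_ne_zero _ _ _ hg.del (by simpa using hg.κ' j)
      (hg.gj j 0 1 0 0 1 0 _ (by simp) (by simp))
    rw [pN, pN, neg_add, zpow_add₀ this, _root_.zpow_neg_one]; field_simp
  gξ := hg.xi n m h
  gξd := hg.g0 1 (n + 1) m h 0 _ (by simp) (by simp [KPData.xi]; ring)
  gξκ i := hg.gi i 1 n m h 1 0 _ (by simp) (by simp [KPData.xi])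
  gκ := hg.κ
  gκ' := hg.κ'
  gα := hg.al
  gd := hg.del
  gκκ i j := hg.gij i j 0 0 0 0 1 1 0 _ (by simp) (by simp)
  gκκd i j := hg.gij i j 0 (-1) 0 0 1 1 0 _ (by simp) (by simp; ring)
  gκα i := hg.gi i 0 0 0 0 1 1 _ (by simp) (by simp)
  gκαd i := hg.gi i 0 (-1) 0 0 1 1 _ (by simp) (by simp; ring)
  gκd i := hg.gi i 0 (-1) 0 0 1 0 _ (by simp) (by simp; ring)

lemma Generic.stepm (hg : D.Generic ![α]) (n m h : ℤ) : Step D α D.eps n m h n (m + 1) h where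
  xi := by simp [KPData.xi]; ring
  R i := by
    have : D.L.Phi D.eps (-(D.κ i)) ≠ 0 := Phi_ne_zero _ _ _ hg.eps (by simpa using hg.κ i)
      (hg.gi i 0 0 1 0 (-1) 0 _ (by simp) (by simp))
    rw [pR, pR, zpow_add_one₀ this]; ring
  Nn j := by
    have : D.L.Phi D.eps (D.κ' j) ≠ 0 := Phi_ne_zero _ _ _ hg.eps (by simpa using hg.κ' j)
      (hg.gj j 0 0 1 0 1 0 _ (by simp) (by simp))
    rw [pN, pN, neg_add, zpow_add₀ this, _root_.zpow_neg_one]; field_simp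
  gξ := hg.xi n m h
  gξd := hg.g0 1 n (m + 1) h 0 _ (by simp) (by simp [KPData.xi]; ring)
  gξκ i := hg.gi i 1 n m h 1 0 _ (by simp) (by simp [KPData.xi])
  gκ := hg.κ
  gκ' := hg.κ'
  gα := hg.al
  gd := hg.eps
  gκκ i j := hg.gij i j 0 0 0 0 1 1 0 _ (by simp) (by simp)
  gκκd i j := hg.gij i j 0 0 (-1) 0 1 1 0 _ (by simp) (by simp; ring)
  gκα i := hg.gi i 0 0 0 0 1 1 _ (by simp) (by simp)
  gκαd i := hg.gi i 0 0 (-1) 0 1 1 _ (by simp) (by simp; ring)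
  gκd i := hg.gi i 0 0 (-1) 0 1 0 _ (by simp) (by simp; ring)

lemma Generic.calV (hg : D.Generic ![α]) (n m h : ℤ) (hInv : IsUnit (1 + D.M n m h * D.C).det)
    (hχ : ∀ i, D.L.chi α (D.κ i) (D.xi n m h) ≠ 0) :
    D.calV α n m h = D.L.Phi (D.xi n m h) α - D.s n m h ⬝ᵥ (D.C *ᵥ D.ua α n m h) := by
  refine D.calV_eq α n m h hInv hχ fun i => ?_
  rw [add_comm (D.κ i) α]
  exact D.L.chi_eq α (D.κ i) (D.xi n m h) (hg.xi n m h) hg.al (hg.κ i)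
    (hg.gi i 0 0 0 0 1 1 _ (by simp) (by simp; ring))
    (hg.g0 1 n m h 1 _ (by simp) (by simp [KPData.xi]))
    (hg.gi i 1 n m h 1 0 _ (by simp) (by simp [KPData.xi]))
    (hg.gi i 1 n m h 1 1 _ (by simp) (by simp [KPData.xi]; ring))

lemma Generic.pR_ne (hg : D.Generic ![α]) (hρ0 : ∀ i, D.ρ0 i ≠ 0) (i : Fin N) (n m h : ℤ) :
    D.pR i n m h ≠ 0 := by
  have hk : -(D.κ i) ∉ D.L.pp.lattice := by simpa using hg.κ i
  have a1 : D.L.Phi D.del (-(D.κ i)) ≠ 0 := Phi_ne_zero _ _ _ hg.del hk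
      (hg.gi i 0 1 0 0 (-1) 0 _ (by simp) (by simp))
  have a2 : D.L.Phi D.eps (-(D.κ i)) ≠ 0 := Phi_ne_zero _ _ _ hg.eps hk
      (hg.gi i 0 0 1 0 (-1) 0 _ (by simp) (by simp))
  have a3 : D.L.Phi D.lam (-(D.κ i)) ≠ 0 := Phi_ne_zero _ _ _ hg.lam hk
      (hg.gi i 0 0 0 1 (-1) 0 _ (by simp) (by simp))
  exact mul_ne_zero (mul_ne_zero (mul_ne_zero (zpow_ne_zero _ a1) (zpow_ne_zero _ a2))
    (zpow_ne_zero _ a3)) (hρ0 i)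

lemma ua_step {d : ℂ} {n m h n' m' h' : ℤ} (S : Step D α d n m h n' m' h')
    (hI : IsUnit (1 + D.M n m h * D.C).det) (hI' : IsUnit (1 + D.M n' m' h' * D.C).det)
    (hV : D.calV α n' m' h' = D.L.Phi (D.xi n' m' h') α -
      D.s n' m' h' ⬝ᵥ (D.C *ᵥ D.ua α n' m' h')) :
    D.ua α n' m' h' = D.L.Phi d α • D.ua α n m h - D.calV α n' m' h' • D.u0 n m h := by
  have e := lin_step (D.M n m h) (D.M n' m' h') D.C (D.r n m h) (D.ra α n' m' h') (D.s n' m' h')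
    hI hI' S.hM
  rw [hV]
  conv_lhs => rw [ua, e, S.hra]
  rw [Matrix.mulVec_sub, Matrix.mulVec_smul, Matrix.mulVec_smul, ← S.hra]
  simp only [ua, u0, sub_smul]
  abel

lemma u0_step {d : ℂ} {n m h n' m' h' : ℤ} (S : Step D α d n m h n' m' h')
    (hI : IsUnit (1 + D.M n m h * D.C).det) (hI' : IsUnit (1 + D.M n' m' h' * D.C).det) :
    D.u0 n' m' h' = (1 + D.M n m h * D.C)⁻¹ *ᵥ D.r n' m' h' + D.w0 n' m' h' • D.u0 n m h :=
  lin_step (D.M n m h) (D.M n' m' h') D.C (D.r n m h) (D.r n' m' h') (D.s n' m' h')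
    hI hI' S.hM

lemma chi_step (L : EllLattice) (α d x : ℂ) (hx : x ∉ L.pp.lattice) (hα : α ∉ L.pp.lattice)
    (hd : d ∉ L.pp.lattice) (hαd : α + d ∉ L.pp.lattice) (hxα : x + α ∉ L.pp.lattice)
    (hxd : x + d ∉ L.pp.lattice) (hxαd : x + α + d ∉ L.pp.lattice) :
    L.chi α d x * L.Phi (x + d) α = L.Phi d α * L.Phi x α := by
  have h := L.chi_eq α d x hx hα hd hαd hxα hxd hxαd
  rw [← EllLattice.sigma_eq_zero] at *
  simp only [EllLattice.Phi, ← add_assoc, add_comm d α, add_right_comm x d α] at h ⊢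
  field_simp at h ⊢
  linear_combination h

end generic
end KPData

/-- Nonlinear shift relation `Ṽ̂_α (ŵ − w̃) = χ_{α,δ}(ξ+ε) V̂_α − χ_{α,ε}(ξ+δ) Ṽ_α`. -/
theorem V_w_nonlinear_relation {N N' : ℕ} (D : KPData N N') (α : ℂ)
    (hρ0 : ∀ i, D.ρ0 i ≠ 0) (hν0 : ∀ j, D.ν0 j ≠ 0)
    (hgen : D.Generic ![α])
    (hInv : ∀ n m h : ℤ, IsUnit ((1 + D.M n m h * D.C).det))
    (hχα : ∀ (n m h : ℤ) (i : Fin N), D.L.chi α (D.κ i) (D.xi n m h) ≠ 0) :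
    ∀ n m h : ℤ,
      D.V α (n + 1) (m + 1) h * (D.w n (m + 1) h - D.w (n + 1) m h) =
        D.L.chi α D.del (D.xi n (m + 1) h) * D.V α n (m + 1) h -
          D.L.chi α D.eps (D.xi (n + 1) m h) * D.V α (n + 1) m h := by
  intro n m h
  have S1 := hgen.stepn n m h
  have S2 := hgen.stepm n m h
  have S3 := hgen.stepn n (m + 1) h
  have S4 := hgen.stepm (n + 1) m h
  have hw : D.w n (m + 1) h - D.w (n + 1) m h =
      D.L.zeta (D.xi n (m + 1) h) - D.L.zeta (D.xi (n + 1) m h) + D.w0 (n + 1) m h -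
        D.w0 n (m + 1) h + D.L.zeta D.del - D.L.zeta D.eps := by
    simp only [KPData.w, zsmul_eq_mul]; push_cast; ring
  rcases isEmpty_or_nonempty (Fin N) with hN | ⟨⟨i0⟩⟩
  · have hV : ∀ n m h, D.V α n m h = 1 := by
      intro n m h
      have : (D.DK α n m h)⁻¹ *ᵥ D.r n m h = 0 := by ext i; exact hN.elim i
      rw [KPData.V, this]; simp
    have hw0 : ∀ n m h, D.w0 n m h = 0 := by
      intro n m h
      have : (1 + D.M n m h * D.C)⁻¹ *ᵥ D.r n m h = 0 := by ext i; exact hN.elim i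
      rw [KPData.w0, this]; simp
    have e : D.xi n (m + 1) h + α + D.del = D.xi (n + 1) m h + α + D.eps := by
      rw [S1.xi, S2.xi]; ring
    rw [hw, hV, hV, hV, hw0, hw0, EllLattice.chi, EllLattice.chi, e]
    ring
  · have hV : ∀ n m h, D.calV α n m h =
        D.L.Phi (D.xi n m h) α - D.s n m h ⬝ᵥ (D.C *ᵥ D.ua α n m h) := fun n m h =>
      hgen.calV n m h (hInv n m h) (hχα n m h)
    have U1 := KPData.ua_step S1 (hInv _ _ _) (hInv _ _ _) (hV _ _ _)
    have U2 := KPData.ua_step S2 (hInv _ _ _) (hInv _ _ _) (hV _ _ _)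
    have U3 := KPData.ua_step S3 (hInv _ _ _) (hInv _ _ _) (hV _ _ _)
    have U4 := KPData.ua_step S4 (hInv _ _ _) (hInv _ _ _) (hV _ _ _)
    have W1 := KPData.u0_step S1 (hInv _ _ _) (hInv _ _ _)
    have W2 := KPData.u0_step S2 (hInv _ _ _) (hInv _ _ _)
    have hr : D.r (n + 1) m h = D.r n (m + 1) h +
        (D.L.zeta D.del - D.L.zeta (D.xi (n + 1) m h) - D.L.zeta D.eps +
          D.L.zeta (D.xi n (m + 1) h)) • D.r n m h := by
      ext i
      rw [Pi.add_apply, Pi.smul_apply, smul_eq_mul, S1.hr, S2.hr]; ring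
    rw [hr, Matrix.mulVec_add, Matrix.mulVec_smul] at W1
    have hu0 : D.u0 n m h ≠ 0 := by
      intro h0
      have : D.r n m h = 0 := by
        have e : (1 + D.M n m h * D.C) *ᵥ D.u0 n m h = D.r n m h := by
          rw [KPData.u0, Matrix.mulVec_mulVec, Matrix.mul_nonsing_inv _ (hInv _ _ _),
            Matrix.one_mulVec]
        rw [← e, h0, Matrix.mulVec_zero]
      have := congrFun this i0
      rw [KPData.r_eq, Pi.zero_apply] at this
      exact mul_ne_zero (hgen.pR_ne hρ0 i0 n m h)
        (KPData.Phi_ne_zero _ _ _ (hgen.xi n m h) (hgen.κ i0) (S1.gξκ i0)) this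
    obtain ⟨i, hi⟩ := Function.ne_iff.mp hu0
    rw [Pi.zero_apply] at hi
    have u1 := congrFun U1 i
    have u2 := congrFun U2 i
    have u3 := congrFun U3 i
    have u4 := congrFun U4 i
    have w1 := congrFun W1 i
    have w2 := congrFun W2 i
    have hb : ((1 + D.M n m h * D.C)⁻¹ *ᵥ D.r n m h) i = D.u0 n m h i := rfl
    simp only [Pi.add_apply, Pi.sub_apply, Pi.smul_apply, smul_eq_mul, hb] at u1 u2 u3 u4 w1 w2
    have key : D.calV α (n + 1) (m + 1) h * (D.w n (m + 1) h - D.w (n + 1) m h) =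
        D.L.Phi D.del α * D.calV α n (m + 1) h - D.L.Phi D.eps α * D.calV α (n + 1) m h := by
      refine mul_right_cancel₀ hi ?_
      rw [hw]
      linear_combination D.calV α (n + 1) (m + 1) h * (w2 - w1) - u3 + u4 -
        D.L.Phi D.del α * u2 + D.L.Phi D.eps α * u1
    have x3 : D.xi (n + 1) (m + 1) h = D.xi n (m + 1) h + D.del := S3.xi
    have x4 : D.xi (n + 1) (m + 1) h = D.xi (n + 1) m h + D.eps := S4.xi
    have c1 := KPData.chi_step D.L α D.del (D.xi n (m + 1) h) (hgen.xi _ _ _) hgen.al hgen.del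
      (hgen.g0 0 1 0 0 1 _ (by simp) (by simp; ring))
      (hgen.g0 1 n (m + 1) h 1 _ (by simp) (by simp [KPData.xi]))
      (hgen.g0 1 (n + 1) (m + 1) h 0 _ (by simp) (by simp [KPData.xi]; ring))
      (hgen.g0 1 (n + 1) (m + 1) h 1 _ (by simp) (by simp [KPData.xi]; ring))
    have c2 := KPData.chi_step D.L α D.eps (D.xi (n + 1) m h) (hgen.xi _ _ _) hgen.al hgen.eps
      (hgen.g0 0 0 1 0 1 _ (by simp) (by simp; ring))
      (hgen.g0 1 (n + 1) m h 1 _ (by simp) (by simp [KPData.xi]))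
      (hgen.g0 1 (n + 1) (m + 1) h 0 _ (by simp) (by simp [KPData.xi]; ring))
      (hgen.g0 1 (n + 1) (m + 1) h 1 _ (by simp) (by simp [KPData.xi]; ring))
    rw [← x3] at c1
    rw [← x4] at c2
    have hP : D.L.Phi (D.xi (n + 1) (m + 1) h) α ≠ 0 :=
      KPData.Phi_ne_zero _ _ _ (hgen.xi _ _ _) hgen.al
        (hgen.g0 1 (n + 1) (m + 1) h 1 _ (by simp) (by simp [KPData.xi]))
    simp only [KPData.calV] at key
    refine mul_left_cancel₀ hP ?_
    linear_combination key - D.V α n (m + 1) h * c1 + D.V α (n + 1) m h * c2
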